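/- Let λ₁, λ₂, λ₃ : ℝ → ℝ be functions, each differentiable at 0, and suppose there is an open interval I containing 0 such that for every ε ∈ I: λ₁(ε)·λ₂(ε)·λ₃(ε) = 1 + ε, λ₁(ε) + λ₂(ε) + λ₃(ε) = 5 + ε, and λ₁(ε)·λ₂(ε) + λ₁(ε)·λ₃(ε) + λ₂(ε)·λ₃(ε) = 6 + 3ε. If 1 < λ₂(0) < 2, then λ₂′(0) ≠ 0. -/

import Mathlib

/-!
Every eigenvalue `x ε` is a root of the pencil `p + ε q`, where `p = X³ - 5X² + 6X - 1` and
`q = -X² + 3X - 1`. Differentiating `p(x) + ε q(x) = 0` shows that at a critical point of `x` the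
polynomial `q`, hence also `p`, vanishes at `x`; but `p` and `q` are coprime.
-/

open Filter Polynomial Topology

section Pencil

variable {𝕜 : Type*} [NontriviallyNormedField 𝕜] {p q : 𝕜[X]} {x : 𝕜 → 𝕜} {t : 𝕜}

theorem eval_derivative_mul_add_eval_eq_zero_of_pencil_root {x' : 𝕜} (hx : HasDerivAt x x' t)
    (hroot : ∀ᶠ s in 𝓝 t, p.eval (x s) + s * q.eval (x s) = 0) :
    (p.derivative.eval (x t) + t * q.derivative.eval (x t)) * x' + q.eval (x t) = 0 := by
  have hp : HasDerivAt (fun s ↦ p.eval (x s)) (p.derivative.eval (x t) * x') t :=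
    (p.hasDerivAt (x t)).comp t hx
  have hq : HasDerivAt (fun s ↦ q.eval (x s)) (q.derivative.eval (x t) * x') t :=
    (q.hasDerivAt (x t)).comp t hx
  have hzero : HasDerivAt (fun s ↦ p.eval (x s) + s * q.eval (x s)) 0 t :=
    (hasDerivAt_const t 0).congr_of_eventuallyEq hroot
  linear_combination (hp.add ((hasDerivAt_id' t).mul hq)).unique hzero

theorem deriv_pencil_root_ne_zero (hpq : IsCoprime p q) (hx : DifferentiableAt 𝕜 x t)
    (hroot : ∀ᶠ s in 𝓝 t, p.eval (x s) + s * q.eval (x s) = 0) :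
    deriv x t ≠ 0 := by
  intro hcrit
  have hq : q.eval (x t) = 0 := by
    simpa only [hcrit, mul_zero, zero_add] using
      eval_derivative_mul_add_eval_eq_zero_of_pencil_root hx.hasDerivAt hroot
  have hp : p.eval (x t) = 0 := by
    simpa only [hq, mul_zero, add_zero] using hroot.self_of_nhds
  obtain ⟨a, b, hab⟩ := hpq
  simpa [hp, hq] using congrArg (eval (x t)) hab

end Pencil

section Family

variable {R : Type*} [CommRing R]

variable (R) in
/-- The characteristic polynomial of the linear automorphism `[[2,1,0],[1,2,1],[0,1,1]]`. -/
noncomputable def linearCharpoly : R[X] := X ^ 3 - 5 * X ^ 2 + 6 * X - 1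

variable (R) in
/-- The coefficient of `ε` in the characteristic polynomial
`X³ - (5 + ε) X² + (6 + 3ε) X - (1 + ε)` of the differential of the perturbed map at the fixed
point. -/
noncomputable def charpolyVariation : R[X] := -X ^ 2 + 3 * X - 1

theorem isCoprime_linearCharpoly_charpolyVariation :
    IsCoprime (linearCharpoly R) (charpolyVariation R) := by
  -- Euclid's algorithm: `p = (2 - X) q + (1 - X)` and `q = (X - 2) (1 - X) + 1`.
  refine ⟨2 - X, 1 - (2 - X) ^ 2, ?_⟩
  rw [linearCharpoly, charpolyVariation]
  ring

theorem eval_linearCharpoly_add_mul_eval_charpolyVariation {a b c ε : R}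
    (hprod : a * b * c = 1 + ε) (hsum : a + b + c = 5 + ε)
    (hsym : a * b + a * c + b * c = 6 + 3 * ε) :
    (linearCharpoly R).eval b + ε * (charpolyVariation R).eval b = 0 := by
  have hvieta : b ^ 3 - (a + b + c) * b ^ 2 + (a * b + a * c + b * c) * b - a * b * c = 0 := by
    ring
  rw [hprod, hsum, hsym] at hvieta
  simp only [linearCharpoly, charpolyVariation, eval_add, eval_sub, eval_neg, eval_mul, eval_pow,
    eval_X, eval_one, eval_ofNat]
  linear_combination hvieta

end Family

theorem stmt14_general {𝕜 : Type*} [NontriviallyNormedField 𝕜] {l1 l2 l3 : 𝕜 → 𝕜} {t : 𝕜}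
    (h2 : DifferentiableAt 𝕜 l2 t)
    (hprod : ∀ᶠ ε in 𝓝 t, l1 ε * l2 ε * l3 ε = 1 + ε)
    (hsum : ∀ᶠ ε in 𝓝 t, l1 ε + l2 ε + l3 ε = 5 + ε)
    (hsym : ∀ᶠ ε in 𝓝 t, l1 ε * l2 ε + l1 ε * l3 ε + l2 ε * l3 ε = 6 + 3 * ε) :
    deriv l2 t ≠ 0 := by
  refine deriv_pencil_root_ne_zero isCoprime_linearCharpoly_charpolyVariation h2 ?_
  filter_upwards [hprod, hsum, hsym] with ε hprod hsum hsym
  exact eval_linearCharpoly_add_mul_eval_charpolyVariation hprod hsum hsym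

/-- Gogolev–Kolmogorov–Maimon dissipative family: if three functions, differentiable
at `0`, satisfy the elementary symmetric relations `λ₁λ₂λ₃ = 1 + ε`,
`λ₁ + λ₂ + λ₃ = 5 + ε`, `λ₁λ₂ + λ₁λ₃ + λ₂λ₃ = 6 + 3ε` on an open interval around `0`,
and `1 < λ₂(0) < 2`, then `λ₂′(0) ≠ 0`. -/
theorem stmt14 (l1 l2 l3 : ℝ → ℝ)
    (h1 : DifferentiableAt ℝ l1 0) (h2 : DifferentiableAt ℝ l2 0)
    (h3 : DifferentiableAt ℝ l3 0)
    (δ : ℝ) (hδ : 0 < δ)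
    (hprod : ∀ ε ∈ Set.Ioo (-δ) δ, l1 ε * l2 ε * l3 ε = 1 + ε)
    (hsum : ∀ ε ∈ Set.Ioo (-δ) δ, l1 ε + l2 ε + l3 ε = 5 + ε)
    (hsym : ∀ ε ∈ Set.Ioo (-δ) δ,
      l1 ε * l2 ε + l1 ε * l3 ε + l2 ε * l3 ε = 6 + 3 * ε)
    (hl2 : l2 0 ∈ Set.Ioo (1:ℝ) 2) :
    deriv l2 0 ≠ 0 := by
  have hI : Set.Ioo (-δ) δ ∈ 𝓝 0 := Ioo_mem_nhds (neg_lt_zero.mpr hδ) hδ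
  exact stmt14_general h2 (mem_of_superset hI hprod) (mem_of_superset hI hsum)
    (mem_of_superset hI hsym)
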